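/- Let 1 ≤ q < 2 and q ≤ p < p_q, where 1/p_q = 1/q − 1/2, and let 2 < s ≤ ∞ be defined by 1/s = 1/q' + (1 − 2/q')(1/q − 1/p) (q' the conjugate exponent of q). For every constant C > 0 and every sequence (k_n) of natural numbers such that π_{p,q}(T) ≤ C · π_{p,q}^{k_n}(T) holds for every n and every bounded operator T between real Banach spaces of rank at most n, there exists a constant c₁ such that n^{s/2} ≤ c₁ · e^{c₁ √(1 + ln n)} · k_n for all n. -/

import Mathlib

open scoped ENNReal NNReal BigOperators

noncomputable section

/-- The `ℓ_p`-sum `(∑ i, f i ^ p) ^ (1/p)` of a finite family in `ℝ≥0∞`,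
with the usual sup-modification for `p = ∞`. -/
def eSum (p : ℝ≥0∞) {ι : Type*} [Fintype ι] (f : ι → ℝ≥0∞) : ℝ≥0∞ :=
  if p = ∞ then ⨆ i, f i else (∑ i, f i ^ p.toReal) ^ (1 / p.toReal)

/-- The weak `ℓ_q`-norm of a finite family of vectors:
`sup { (∑ k |⟨x_k, x*⟩|^q)^(1/q) : x* in the unit ball of the dual }`. -/
def weakLq (q : ℝ≥0∞) {X : Type*} [NormedAddCommGroup X] [NormedSpace ℝ X]
    {n : ℕ} (x : Fin n → X) : ℝ≥0∞ :=
  ⨆ f : {f : X →L[ℝ] ℝ // ‖f‖ ≤ 1}, eSum q fun k => ENNReal.ofReal |f.1 (x k)|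

/-- The `(p,q)`-summing norm of `T` with respect to `n` vectors. -/
def piN (p q : ℝ≥0∞) {X Y : Type*} [NormedAddCommGroup X] [NormedSpace ℝ X]
    [NormedAddCommGroup Y] [NormedSpace ℝ Y] (n : ℕ) (T : X →L[ℝ] Y) : ℝ≥0∞ :=
  ⨆ x : {x : Fin n → X // weakLq q x ≤ 1}, eSum p fun k => ENNReal.ofReal ‖T (x.1 k)‖

/-- The `(p,q)`-summing norm of `T`. -/
def piPQ (p q : ℝ≥0∞) {X Y : Type*} [NormedAddCommGroup X] [NormedSpace ℝ X]
    [NormedAddCommGroup Y] [NormedSpace ℝ Y] (T : X →L[ℝ] Y) : ℝ≥0∞ :=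
  ⨆ n : ℕ, piN p q n T

/-- `T` has rank at most `n`: its range is a finite-dimensional subspace of
dimension at most `n`. -/
def RankLE {X Y : Type*} [NormedAddCommGroup X] [NormedSpace ℝ X]
    [NormedAddCommGroup Y] [NormedSpace ℝ Y] (T : X →L[ℝ] Y) (n : ℕ) : Prop :=
  FiniteDimensional ℝ (LinearMap.range (T : X →ₗ[ℝ] Y)) ∧
    Module.finrank ℝ (LinearMap.range (T : X →ₗ[ℝ] Y)) ≤ n

/-- The average of `‖∑ k, ε k • x k‖²` over all `2^n` sign choices `ε ∈ {-1,1}^n`. -/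
def radAvg {X : Type*} [NormedAddCommGroup X] [NormedSpace ℝ X] {n : ℕ}
    (x : Fin n → X) : ℝ :=
  (∑ ε : Fin n → Bool, ‖∑ k, (if ε k then (1 : ℝ) else -1) • x k‖ ^ 2) / 2 ^ n

/-- The Rademacher cotype `q` constant of `T` with respect to `n` vectors. -/
def cotypeN (q : ℝ) {X Y : Type*} [NormedAddCommGroup X] [NormedSpace ℝ X]
    [NormedAddCommGroup Y] [NormedSpace ℝ Y] (n : ℕ) (T : X →L[ℝ] Y) : ℝ≥0∞ :=
  ⨆ x : {x : Fin n → X // Real.sqrt (radAvg x) ≤ 1},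
    (∑ k, ENNReal.ofReal ‖T (x.1 k)‖ ^ q) ^ (1 / q)

/-- The Rademacher cotype `q` constant of `T`. -/
def cotype (q : ℝ) {X Y : Type*} [NormedAddCommGroup X] [NormedSpace ℝ X]
    [NormedAddCommGroup Y] [NormedSpace ℝ Y] (T : X →L[ℝ] Y) : ℝ≥0∞ :=
  ⨆ n : ℕ, cotypeN q n T

/-!
Write `r = p_q`. A family in `ℓ_{q'}^N` has weak `ℓ_q`-norm at most `1` exactly when the matrix of
its coordinates is a contraction from `ℓ_q^N` to `ℓ_q`. For such a matrix with rows `x_j`, choosing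
signs greedily in `∑ ± ‖x_j‖₂^(r(1 - 1/q)) x_j` and dualizing gives `∑ ‖x_j‖₂^r ≤ N`. Interpolating
the resulting bound on `∑ ‖x_j‖₁^r` with the trivial one on `∑ ‖x_j‖₁^q` yields
`(∑ ‖x_j‖₁^p)^(1/p) ≤ N^(1/s + 1/p)`.

For a prime `m`, the graphs of `N ≤ m^d` distinct polynomials of degree less than `d` over `𝔽_m`,
as vectors in `ℝ^(m²)`, have a normalized Gram matrix of rank at most `m²` with ones on the diagonal
and off-diagonal entries at most `d/m`. As an operator from `ℓ_{q'}^N` to `ℓ_∞^N` it satisfies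
`π_{p,q} ≥ N^(1/p)`, while `π_{p,q}^k ≤ k^(1/p) + (d/m) N^(1/s + 1/p)`. Taking `N` a small multiple
of `m^s` absorbs the last term, so that `N ≲ k`; now choose `m` comparable to `√n`.
-/

lemma exists_signs_sum_norm_sq_le {ι E : Type*} [NormedAddCommGroup E] [InnerProductSpace ℝ E]
    (s : Finset ι) (y : ι → E) :
    ∃ ε : ι → ℝ, (∀ i, |ε i| = 1) ∧ ∑ i ∈ s, ‖y i‖ ^ 2 ≤ ‖∑ i ∈ s, ε i • y i‖ ^ 2 := by
  classical
  induction s using Finset.induction_on with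
  | empty => exact ⟨1, by simp, by simp⟩
  | insert a s ha ih =>
    obtain ⟨ε, hε, hs⟩ := ih
    obtain ⟨δ, hδ, hinner⟩ : ∃ δ : ℝ, |δ| = 1 ∧ 0 ≤ δ * inner ℝ (y a) (∑ i ∈ s, ε i • y i) := by
      rcases le_total 0 (inner ℝ (y a) (∑ i ∈ s, ε i • y i)) with h | h
      · exact ⟨1, by simp, by simpa⟩
      · exact ⟨-1, by simp, by simpa⟩
    have hupdate : ∑ i ∈ s, Function.update ε a δ i • y i = ∑ i ∈ s, ε i • y i :=
      Finset.sum_congr rfl fun i hi => by rw [Function.update_of_ne (ne_of_mem_of_not_mem hi ha)]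
    refine ⟨Function.update ε a δ, fun i => ?_, ?_⟩
    · obtain rfl | h := eq_or_ne i a <;> simp [*]
    · rw [Finset.sum_insert ha, Finset.sum_insert ha, hupdate, Function.update_self,
        norm_add_sq_real, norm_smul, Real.norm_eq_abs, hδ, real_inner_smul_left]
      linarith

section FiniteSums

variable {ι : Type*} [Fintype ι] {p q r t θ : ℝ}

lemma sum_rpow_one_sub_mul_le (hq : 1 ≤ q) {w b : ι → ℝ} (hw : ∀ i, 0 ≤ w i)
    (hb : ∀ i, 0 ≤ b i) :
    ∑ i, w i ^ (1 - 1 / q) * b i ≤ (∑ i, w i) ^ (1 - 1 / q) * (∑ i, b i ^ q) ^ (1 / q) := by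
  obtain rfl | hq := hq.eq_or_lt
  · simp
  have hconj : q.conjExponent.HolderConjugate q := (Real.HolderConjugate.conjExponent hq).symm
  have hexp : 1 - 1 / q = 1 / q.conjExponent := by
    simpa using hconj.symm.one_sub_inv
  have hpow i : (w i ^ (1 / q.conjExponent)) ^ q.conjExponent = w i := by
    rw [← Real.rpow_mul (hw i), one_div_mul_cancel hconj.ne_zero, Real.rpow_one]
  simpa only [hexp, hpow] using Real.inner_le_Lp_mul_Lq_of_nonneg Finset.univ hconj
    (fun i _ => Real.rpow_nonneg (hw i) (1 / q.conjExponent)) fun i _ => hb i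

lemma sum_rpow_rpow_le_card_rpow_mul (hq : 0 < q) (hqt : q ≤ t) (f : ι → ℝ) :
    (∑ i, |f i| ^ q) ^ (1 / q) ≤
      (Fintype.card ι : ℝ) ^ (1 / q - 1 / t) * (∑ i, |f i| ^ t) ^ (1 / t) := by
  have ht : 0 < t := hq.trans_le hqt
  have hsum : (∑ i, |f i| ^ q) ^ (t / q) ≤
      (Fintype.card ι : ℝ) ^ (t / q - 1) * ∑ i, |f i| ^ t := by
    have hpow i : |(|f i| ^ q)| ^ (t / q) = |f i| ^ t := by
      rw [abs_of_nonneg (by positivity), ← Real.rpow_mul (abs_nonneg _), mul_div_cancel₀ _ hq.ne']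
    have h := Real.rpow_sum_le_const_mul_sum_rpow Finset.univ (fun i => |f i| ^ q)
      ((one_le_div hq).2 hqt)
    rw [Finset.sum_congr rfl fun i _ => abs_of_nonneg (by positivity)] at h
    simpa only [hpow, Finset.card_univ] using h
  calc (∑ i, |f i| ^ q) ^ (1 / q) = ((∑ i, |f i| ^ q) ^ (t / q)) ^ (1 / t) := by
        rw [← Real.rpow_mul (by positivity)]; congr 1; field_simp
    _ ≤ ((Fintype.card ι : ℝ) ^ (t / q - 1) * ∑ i, |f i| ^ t) ^ (1 / t) := by gcongr
    _ = _ := by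
        rw [Real.mul_rpow (by positivity) (by positivity), ← Real.rpow_mul (by positivity)]
        congr 2; field_simp

lemma sum_rpow_rpow_le_interpolate (hq : 0 < q) (hr : 0 < r) (hθ₀ : 0 ≤ θ) (hθ₁ : θ ≤ 1)
    (hp : 1 / p = (1 - θ) / q + θ / r) {b : ι → ℝ} (hb : ∀ i, 0 ≤ b i) :
    (∑ i, b i ^ p) ^ (1 / p) ≤
      ((∑ i, b i ^ q) ^ (1 / q)) ^ (1 - θ) * ((∑ i, b i ^ r) ^ (1 / r)) ^ θ := by
  obtain rfl | hθ₀ := hθ₀.eq_or_lt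
  · obtain rfl : p = q := by simpa using hp
    simp
  obtain rfl | hθ₁ := hθ₁.eq_or_lt
  · obtain rfl : p = r := by simpa using hp
    simp
  have hθ₂ : 0 < 1 - θ := sub_pos.2 hθ₁
  have hholder : (q / (1 - θ)).HolderTriple (r / θ) p :=
    ⟨by simpa [eq_comm] using hp, by positivity, by positivity⟩
  have hp₀ : 0 < p := hholder.pos'
  have hsplit i : b i ^ (1 - θ) * b i ^ θ = b i := by
    rw [← Real.rpow_add_of_nonneg (hb i) hθ₂.le hθ₀.le, sub_add_cancel, Real.rpow_one]
  have hpow_q i : (b i ^ (1 - θ)) ^ (q / (1 - θ)) = b i ^ q := by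
    rw [← Real.rpow_mul (hb i), mul_div_cancel₀ _ hθ₂.ne']
  have hpow_r i : (b i ^ θ) ^ (r / θ) = b i ^ r := by
    rw [← Real.rpow_mul (hb i), mul_div_cancel₀ _ hθ₀.ne']
  have hsum : ∑ i, b i ^ p ≤
      (∑ i, b i ^ q) ^ (p / (q / (1 - θ))) * (∑ i, b i ^ r) ^ (p / (r / θ)) := by
    simpa only [hsplit, hpow_q, hpow_r] using Real.Lr_rpow_le_Lp_mul_Lq_of_nonneg Finset.univ
      hholder (fun i _ => Real.rpow_nonneg (hb i) (1 - θ)) fun i _ => Real.rpow_nonneg (hb i) θ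
  have hnonneg (a : ℝ) : 0 ≤ ∑ i, b i ^ a :=
    Finset.sum_nonneg fun i _ => Real.rpow_nonneg (hb i) a
  calc (∑ i, b i ^ p) ^ (1 / p)
      ≤ ((∑ i, b i ^ q) ^ (p / (q / (1 - θ))) * (∑ i, b i ^ r) ^ (p / (r / θ))) ^ (1 / p) :=
        Real.rpow_le_rpow (hnonneg p) hsum (by positivity)
    _ = _ := by
        rw [Real.mul_rpow (Real.rpow_nonneg (hnonneg q) _) (Real.rpow_nonneg (hnonneg r) _)]
        simp only [← Real.rpow_mul (hnonneg _)]
        congr 2 <;> field_simp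

end FiniteSums

/-- The matrix `x` acts as a contraction from `ℓ_q^ι` to `ℓ_q^J`. Its rows are then the coordinate
vectors of a family of weak `ℓ_q`-norm at most `1` in the dual of `ℓ_q^ι`. -/
def IsLpContraction {ι J : Type*} [Fintype ι] [Fintype J] (q : ℝ) (x : Matrix J ι ℝ) : Prop :=
  ∀ g : ι → ℝ, ∑ j, |(x.mulVec g) j| ^ q ≤ ∑ i, |g i| ^ q

namespace IsLpContraction

variable {ι J : Type*} [Fintype ι] [Fintype J] {p q r s : ℝ} {x : Matrix J ι ℝ}

lemma sum_col_rpow_le_one (hx : IsLpContraction q x) (hq : 0 < q) (i : ι) :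
    ∑ j, |x j i| ^ q ≤ 1 := by
  classical
  simpa [Pi.single_apply, apply_ite, ite_pow, hq.ne'] using hx (Pi.single i 1)

lemma abs_apply_le_one (hx : IsLpContraction q x) (hq : 0 < q) (j : J) (i : ι) : |x j i| ≤ 1 := by
  have hentry : |x j i| ^ q ≤ 1 :=
    (Finset.single_le_sum (f := fun j => |x j i| ^ q) (fun _ _ => by positivity)
      (Finset.mem_univ j)).trans (hx.sum_col_rpow_le_one hq i)
  contrapose! hentry
  exact Real.one_lt_rpow hentry hq

lemma sum_mulVec_rpow_rpow_le (hx : IsLpContraction q x) (hq₀ : 0 < q) (hq₂ : q ≤ 2)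
    (v : EuclideanSpace ℝ ι) :
    (∑ j, |(x.mulVec v) j| ^ q) ^ (1 / q) ≤
      (Fintype.card ι : ℝ) ^ (1 / q - 1 / 2) * ‖v‖ := by
  calc (∑ j, |(x.mulVec v) j| ^ q) ^ (1 / q) ≤ (∑ i, |v i| ^ q) ^ (1 / q) := by
        gcongr; exact hx v
    _ ≤ (Fintype.card ι : ℝ) ^ (1 / q - 1 / 2) * (∑ i, |v i| ^ (2 : ℝ)) ^ (1 / 2 : ℝ) :=
        sum_rpow_rpow_le_card_rpow_mul hq₀ hq₂ v
    _ = _ := by simp [EuclideanSpace.norm_eq, Real.sqrt_eq_rpow]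

lemma norm_sum_smul_row_le (hx : IsLpContraction q x) (hq₁ : 1 ≤ q) (hq₂ : q ≤ 2)
    {c w : J → ℝ} (hw : ∀ j, 0 ≤ w j) (hc : ∀ j, |c j| ≤ w j ^ (1 - 1 / q)) :
    ‖∑ j, c j • (WithLp.toLp 2 (x j) : EuclideanSpace ℝ ι)‖ ≤
      (∑ j, w j) ^ (1 - 1 / q) * (Fintype.card ι : ℝ) ^ (1 / q - 1 / 2) := by
  set v : EuclideanSpace ℝ ι := ∑ j, c j • WithLp.toLp 2 (x j) with hv
  obtain hv₀ | hv₀ := (norm_nonneg v).eq_or_lt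
  · rw [← hv₀]
    have := Finset.sum_nonneg fun j (_ : j ∈ Finset.univ) => hw j
    positivity
  have hnorm_sq : ‖v‖ * ‖v‖ = ∑ j, c j * (x.mulVec v) j := by
    have hrow j : inner ℝ (WithLp.toLp 2 (x j) : EuclideanSpace ℝ ι) v = (x.mulVec v) j := by
      simp [EuclideanSpace.inner_eq_star_dotProduct, Matrix.mulVec, dotProduct_comm]
    rw [← real_inner_self_eq_norm_mul_norm]
    nth_rewrite 1 [hv]
    simp only [sum_inner, real_inner_smul_left, hrow]
  refine le_of_mul_le_mul_right ?_ hv₀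
  calc ‖v‖ * ‖v‖ ≤ ∑ j, w j ^ (1 - 1 / q) * |(x.mulVec v) j| := by
        rw [hnorm_sq]
        refine Finset.sum_le_sum fun j _ => (le_abs_self _).trans ?_
        rw [abs_mul]
        exact mul_le_mul_of_nonneg_right (hc j) (abs_nonneg _)
    _ ≤ (∑ j, w j) ^ (1 - 1 / q) * (∑ j, |(x.mulVec v) j| ^ q) ^ (1 / q) :=
        sum_rpow_one_sub_mul_le hq₁ hw fun _ => abs_nonneg _
    _ ≤ (∑ j, w j) ^ (1 - 1 / q) * ((Fintype.card ι : ℝ) ^ (1 / q - 1 / 2) * ‖v‖) :=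
        mul_le_mul_of_nonneg_left (hx.sum_mulVec_rpow_rpow_le (by linarith) hq₂ v)
          (Real.rpow_nonneg (Finset.sum_nonneg fun j _ => hw j) _)
    _ = _ := by ring

lemma sum_row_l2_rpow_le_card (hx : IsLpContraction q x) (hq : 1 ≤ q) (hr₀ : 0 < r)
    (hr : 1 / r = 1 / q - 1 / 2) :
    ∑ j, ‖(WithLp.toLp 2 (x j) : EuclideanSpace ℝ ι)‖ ^ r ≤ Fintype.card ι := by
  have hq₂ : q ≤ 2 := by
    refine le_of_one_div_le_one_div two_pos ?_
    linarith [one_div_pos.2 hr₀]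
  set y : J → EuclideanSpace ℝ ι := fun j => WithLp.toLp 2 (x j)
  obtain hS | hS := (Finset.sum_nonneg fun j (_ : j ∈ Finset.univ) =>
    Real.rpow_nonneg (norm_nonneg (y j)) r).eq_or_lt
  · rw [← hS]; positivity
  have hexp : 1 - 1 / q = 1 / 2 - 1 / r := by linarith
  have hsq j : ‖(‖y j‖ ^ r) ^ (1 - 1 / q) • y j‖ ^ 2 = ‖y j‖ ^ r := by
    rw [norm_smul, Real.norm_of_nonneg (by positivity), ← Real.rpow_mul (norm_nonneg _),
      ← Real.rpow_add_one' (norm_nonneg _) (by rw [hexp]; field_simp; linarith),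
      ← Real.rpow_mul_natCast (norm_nonneg _), hexp]
    congr 1; push_cast; field_simp; ring
  obtain ⟨ε, hε, hsigns⟩ :=
    exists_signs_sum_norm_sq_le Finset.univ fun j => (‖y j‖ ^ r) ^ (1 - 1 / q) • y j
  simp only [hsq, smul_smul] at hsigns
  have hupper := hx.norm_sum_smul_row_le hq hq₂ (w := fun j => ‖y j‖ ^ r)
    (c := fun j => ε j * (‖y j‖ ^ r) ^ (1 - 1 / q)) (fun j => by positivity)
    fun j => by rw [abs_mul, hε, one_mul, abs_of_nonneg (by positivity)]
  rw [← hr] at hupper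
  have hroot : (∑ j, ‖y j‖ ^ r) ^ (1 - 1 / q) * (∑ j, ‖y j‖ ^ r) ^ (1 / r) ≤
      (∑ j, ‖y j‖ ^ r) ^ (1 - 1 / q) * (Fintype.card ι : ℝ) ^ (1 / r) := by
    rw [← Real.rpow_add hS, hexp, sub_add_cancel, ← Real.sqrt_eq_rpow, ← hexp]
    exact (Real.sqrt_le_iff.2 ⟨norm_nonneg _, hsigns⟩).trans hupper
  have := le_of_mul_le_mul_left hroot (Real.rpow_pos_of_pos hS _)
  exact (Real.rpow_le_rpow_iff hS.le (Nat.cast_nonneg _) (one_div_pos.2 hr₀)).1 this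

lemma sum_row_l1_rpow_self_le (hx : IsLpContraction q x) (hq : 1 ≤ q) :
    (∑ j, (∑ i, |x j i|) ^ q) ^ (1 / q) ≤ Fintype.card ι := by
  have hq₀ : 0 < q := by linarith
  rw [one_div, Real.rpow_inv_le_iff_of_pos (by positivity) (by positivity) hq₀]
  calc ∑ j, (∑ i, |x j i|) ^ q
      ≤ ∑ j, (Fintype.card ι : ℝ) ^ (q - 1) * ∑ i, |x j i| ^ q := by
        gcongr with j
        simpa using Real.rpow_sum_le_const_mul_sum_rpow Finset.univ (x j) hq
    _ = (Fintype.card ι : ℝ) ^ (q - 1) * ∑ i, ∑ j, |x j i| ^ q := by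
        rw [← Finset.mul_sum, Finset.sum_comm]
    _ ≤ (Fintype.card ι : ℝ) ^ (q - 1) * ∑ _ : ι, 1 := by
        gcongr with i
        exact hx.sum_col_rpow_le_one hq₀ i
    _ = (Fintype.card ι : ℝ) ^ q := by
        rw [Finset.sum_const, Finset.card_univ, nsmul_eq_mul, mul_one,
          ← Real.rpow_add_one' (by positivity) (by simpa using hq₀.ne'), sub_add_cancel]

lemma sum_row_l1_rpow_le (hx : IsLpContraction q x) (hq : 1 ≤ q) (hr₀ : 0 < r)
    (hr : 1 / r = 1 / q - 1 / 2) :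
    (∑ j, (∑ i, |x j i|) ^ r) ^ (1 / r) ≤ (Fintype.card ι : ℝ) ^ (1 / q) := by
  have hl1 j : ∑ i, |x j i| ≤
      (Fintype.card ι : ℝ) ^ (1 / 2 : ℝ) * ‖(WithLp.toLp 2 (x j) : EuclideanSpace ℝ ι)‖ := by
    have := sum_rpow_rpow_le_card_rpow_mul one_pos one_le_two (x j)
    norm_num [EuclideanSpace.norm_eq, Real.sqrt_eq_rpow] at this ⊢
    exact this
  calc (∑ j, (∑ i, |x j i|) ^ r) ^ (1 / r)
      ≤ (∑ j, ((Fintype.card ι : ℝ) ^ (1 / 2 : ℝ) *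
          ‖(WithLp.toLp 2 (x j) : EuclideanSpace ℝ ι)‖) ^ r) ^ (1 / r) := by
        gcongr with j; exact hl1 j
    _ = (Fintype.card ι : ℝ) ^ (1 / 2 : ℝ) *
          (∑ j, ‖(WithLp.toLp 2 (x j) : EuclideanSpace ℝ ι)‖ ^ r) ^ (1 / r) := by
        simp only [Real.mul_rpow (Real.rpow_nonneg (Nat.cast_nonneg _) _) (norm_nonneg _),
          ← Finset.mul_sum]
        rw [Real.mul_rpow (by positivity) (by positivity), one_div r,
          Real.rpow_rpow_inv (by positivity) hr₀.ne']
    _ ≤ (Fintype.card ι : ℝ) ^ (1 / 2 : ℝ) * (Fintype.card ι : ℝ) ^ (1 / r) := by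
        gcongr; exact hx.sum_row_l2_rpow_le_card hq hr₀ hr
    _ = (Fintype.card ι : ℝ) ^ (1 / q) := by
        rw [← Real.rpow_add_of_nonneg (by positivity) (by positivity) (by positivity), hr]
        congr 1; ring

lemma sum_row_l1_rpow_le_of_le_of_le [Nonempty ι] (hx : IsLpContraction q x) (hq : 1 ≤ q)
    (hqp : q ≤ p) (hpr : p ≤ r) (hr : 1 / r = 1 / q - 1 / 2)
    (hs : 1 / s = (1 - 1 / q) + (1 - 2 * (1 - 1 / q)) * (1 / q - 1 / p)) :
    (∑ j, (∑ i, |x j i|) ^ p) ^ (1 / p) ≤ (Fintype.card ι : ℝ) ^ (1 / s + 1 / p) := by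
  have hq₀ : 0 < q := by linarith
  have hp₀ : 0 < p := by linarith
  have hr₀ : 0 < r := by linarith
  set θ := 2 * (1 / q - 1 / p) with hθ
  have hθ₀ : 0 ≤ θ := by linarith [one_div_le_one_div_of_le hq₀ hqp]
  have hθ₁ : θ ≤ 1 := by linarith [one_div_le_one_div_of_le hp₀ hpr]
  have hp : 1 / p = (1 - θ) / q + θ / r := by
    rw [div_eq_mul_one_div (1 - θ), div_eq_mul_one_div θ, hr, hθ]; ring
  calc (∑ j, (∑ i, |x j i|) ^ p) ^ (1 / p)
      ≤ ((∑ j, (∑ i, |x j i|) ^ q) ^ (1 / q)) ^ (1 - θ) *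
          ((∑ j, (∑ i, |x j i|) ^ r) ^ (1 / r)) ^ θ :=
        sum_rpow_rpow_le_interpolate hq₀ hr₀ hθ₀ hθ₁ hp fun j => by positivity
    _ ≤ (Fintype.card ι : ℝ) ^ (1 - θ) * ((Fintype.card ι : ℝ) ^ (1 / q)) ^ θ := by
        have := sub_nonneg.2 hθ₁
        gcongr
        · exact hx.sum_row_l1_rpow_self_le hq
        · exact hx.sum_row_l1_rpow_le hq hr₀ hr
    _ = (Fintype.card ι : ℝ) ^ (1 / s + 1 / p) := by
        rw [← Real.rpow_mul (by positivity), ← Real.rpow_add (by positivity), hs, hθ]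
        congr 1; ring

end IsLpContraction

section SummingNorms

variable {X : Type*} [NormedAddCommGroup X] [NormedSpace ℝ X] {p q : ℝ}

lemma eSum_ofReal {ι : Type*} [Fintype ι] (hp : 0 < p) {a : ι → ℝ} (ha : ∀ i, 0 ≤ a i) :
    eSum (ENNReal.ofReal p) (fun i => ENNReal.ofReal (a i)) =
      ENNReal.ofReal ((∑ i, a i ^ p) ^ (1 / p)) := by
  have hpow i : 0 ≤ a i ^ p := Real.rpow_nonneg (ha i) p
  rw [eSum, if_neg ENNReal.ofReal_ne_top, ENNReal.toReal_ofReal hp.le,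
    ← ENNReal.ofReal_rpow_of_nonneg (Finset.sum_nonneg fun i _ => hpow i) (by positivity),
    ENNReal.ofReal_sum_of_nonneg fun i _ => hpow i]
  simp only [ENNReal.ofReal_rpow_of_nonneg (ha _) hp.le]

lemma weakLq_ofReal_le_one_iff (hq : 0 < q) {n : ℕ} {x : Fin n → X} :
    weakLq (ENNReal.ofReal q) x ≤ 1 ↔ ∀ f : StrongDual ℝ X, ∑ j, |f (x j)| ^ q ≤ ‖f‖ ^ q := by
  have hball (f : StrongDual ℝ X) :
      eSum (ENNReal.ofReal q) (fun j => ENNReal.ofReal |f (x j)|) ≤ 1 ↔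
        ∑ j, |f (x j)| ^ q ≤ 1 := by
    rw [eSum_ofReal hq fun j => abs_nonneg _, ENNReal.ofReal_le_one, one_div,
      Real.rpow_inv_le_iff_of_pos (by positivity) zero_le_one hq, Real.one_rpow]
  simp only [weakLq, iSup_le_iff, Subtype.forall, hball]
  refine ⟨fun h f => ?_, fun h f hf => (h f).trans (Real.rpow_le_one (norm_nonneg f) hf hq.le)⟩
  obtain rfl | hf := eq_or_ne f 0
  · simp [hq.ne']
  have hf₀ : 0 < ‖f‖ := norm_pos_iff.2 hf
  have hscaled := h (‖f‖⁻¹ • f) (by rw [norm_smul, norm_inv, norm_norm, inv_mul_cancel₀ hf₀.ne'])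
  simp only [smul_apply, smul_eq_mul, abs_mul, abs_inv, abs_norm,
    Real.mul_rpow (inv_nonneg.2 (norm_nonneg f)) (abs_nonneg _), ← Finset.mul_sum,
    Real.inv_rpow (norm_nonneg f)] at hscaled
  rwa [inv_mul_le_iff₀ (by positivity), mul_one] at hscaled

end SummingNorms

/-- The space `ℓ_{q'}^ι`, with `q'` the conjugate exponent of `q`. Realizing it as the dual of
`ℓ_q^ι` makes the case `q = 1` uniform with the others. -/
abbrev DualLp (q : ℝ) (ι : Type*) [Fintype ι] [Fact (1 ≤ ENNReal.ofReal q)] : Type _ :=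
  StrongDual ℝ (PiLp (ENNReal.ofReal q) fun _ : ι => ℝ)

namespace DualLp

variable (q : ℝ) {ι : Type*} [Fintype ι] [Fact (1 ≤ ENNReal.ofReal q)]

variable (ι) in
/-- The coordinates of an element of `ℓ_{q'}^ι`: its values on the unit vectors of `ℓ_q^ι`. -/
def coord : DualLp q ι ≃ₗ[ℝ] (ι → ℝ) :=
  LinearMap.toContinuousLinearMap.symm ≪≫ₗ
    ((PiLp.basisFun (ENNReal.ofReal q) ℝ ι).constr ℝ).symm

variable {q}

lemma apply_eq_sum_coord (x : DualLp q ι) (g : PiLp (ENNReal.ofReal q) fun _ : ι => ℝ) :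
    x g = ∑ i, coord q ι x i * g i := by
  conv_lhs => rw [← (PiLp.basisFun (ENNReal.ofReal q) ℝ ι).sum_repr g]
  simp [coord, mul_comm]

lemma inclusionInDoubleDual_surjective :
    Function.Surjective (NormedSpace.inclusionInDoubleDual ℝ
      (PiLp (ENNReal.ofReal q) fun _ : ι => ℝ)) := by
  have hfinrank : Module.finrank ℝ (PiLp (ENNReal.ofReal q) fun _ : ι => ℝ) =
      Module.finrank ℝ (StrongDual ℝ (DualLp q ι)) := by
    calc Module.finrank ℝ (PiLp (ENNReal.ofReal q) fun _ : ι => ℝ)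
        = Module.finrank ℝ (DualLp q ι) := by
          rw [(coord q ι).finrank_eq, Module.finrank_fintype_fun_eq_card,
            Module.finrank_eq_card_basis (PiLp.basisFun (ENNReal.ofReal q) ℝ ι)]
      _ = Module.finrank ℝ (Module.Dual ℝ (DualLp q ι)) := Subspace.dual_finrank_eq.symm
      _ = Module.finrank ℝ (StrongDual ℝ (DualLp q ι)) :=
        LinearMap.toContinuousLinearMap.finrank_eq
  exact (LinearMap.injective_iff_surjective_of_finrank_eq_finrank hfinrank).1
    (NormedSpace.inclusionInDoubleDualLi (E := PiLp (ENNReal.ofReal q) fun _ : ι => ℝ) ℝ).injective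

lemma weakLq_le_one_iff (hq : 0 < q) {n : ℕ} {x : Fin n → DualLp q ι} :
    weakLq (ENNReal.ofReal q) x ≤ 1 ↔ IsLpContraction q (Matrix.of fun j => coord q ι (x j)) := by
  rw [weakLq_ofReal_le_one_iff hq, inclusionInDoubleDual_surjective.forall,
    (WithLp.equiv (ENNReal.ofReal q) (ι → ℝ)).forall_congr_left]
  refine forall_congr' fun g => ?_
  have hnorm : ‖NormedSpace.inclusionInDoubleDual ℝ _
      (WithLp.toLp (ENNReal.ofReal q) g : PiLp (ENNReal.ofReal q) fun _ : ι => ℝ)‖ ^ q =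
      ∑ i, |g i| ^ q := by
    have hnorm_map := (NormedSpace.inclusionInDoubleDualLi ℝ).norm_map
      (WithLp.toLp (ENNReal.ofReal q) g : PiLp (ENNReal.ofReal q) fun _ : ι => ℝ)
    rw [show ‖NormedSpace.inclusionInDoubleDual ℝ _ _‖ = _ from hnorm_map,
      PiLp.norm_eq_sum (by rwa [ENNReal.toReal_ofReal hq.le]), ENNReal.toReal_ofReal hq.le, one_div,
      Real.rpow_inv_rpow (by positivity) hq.ne']
    simp
  have hcoord j : NormedSpace.inclusionInDoubleDual ℝ _
      (WithLp.toLp (ENNReal.ofReal q) g : PiLp (ENNReal.ofReal q) fun _ : ι => ℝ) (x j) =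
      (Matrix.of fun j => coord q ι (x j)).mulVec g j :=
    apply_eq_sum_coord (x j) _
  simp only [WithLp.equiv_symm_apply, hnorm, hcoord]

end DualLp

lemma abs_mulVec_apply_le {ι κ : Type*} [Fintype ι] {M : Matrix κ ι ℝ} {η : ℝ} {c : κ} {i₀ : ι}
    (hη : 0 ≤ η) (hi₀ : |M c i₀| ≤ 1) (hoff : ∀ i ≠ i₀, |M c i| ≤ η) (y : ι → ℝ) :
    |M.mulVec y c| ≤ |y i₀| + η * ∑ i, |y i| := by
  classical
  calc |M.mulVec y c| ≤ ∑ i, |M c i| * |y i| := by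
        simpa only [abs_mul, Matrix.mulVec, dotProduct] using
          Finset.abs_sum_le_sum_abs (fun i => M c i * y i) Finset.univ
    _ = |M c i₀| * |y i₀| + ∑ i ∈ Finset.univ.erase i₀, |M c i| * |y i| :=
        (Finset.add_sum_erase _ _ (Finset.mem_univ i₀)).symm
    _ ≤ 1 * |y i₀| + ∑ i ∈ Finset.univ.erase i₀, η * |y i| := by
        gcongr with i hi
        exact hoff i (Finset.ne_of_mem_erase hi)
    _ ≤ |y i₀| + η * ∑ i, |y i| := by
        rw [one_mul, ← Finset.mul_sum]
        gcongr
        exact Finset.erase_subset _ _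

section MatrixOperator

variable (q : ℝ) {ι κ : Type*} [Fintype ι] [Fact (1 ≤ ENNReal.ofReal q)]

/-- The operator from `ℓ_{q'}^ι` to `ℓ_∞^κ` with matrix `M`. -/
def matrixOperator (M : Matrix κ ι ℝ) : DualLp q ι →L[ℝ] (κ → ℝ) :=
  LinearMap.toContinuousLinearMap (M.mulVecLin ∘ₗ (DualLp.coord q ι).toLinearMap)

variable {q} {M : Matrix κ ι ℝ} {p s pq η : ℝ}

lemma matrixOperator_apply (x : DualLp q ι) :
    matrixOperator q M x = M.mulVec (DualLp.coord q ι x) := rfl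

variable [Fintype κ]

lemma rankLE_matrixOperator {n : ℕ} (hM : M.rank ≤ n) : RankLE (matrixOperator q M) n := by
  refine ⟨inferInstance, ?_⟩
  rwa [matrixOperator, LinearMap.coe_toContinuousLinearMap, LinearEquiv.range_comp]

lemma ofReal_card_rpow_le_piPQ_matrixOperator (hq : 0 < q) (hp : 0 < p)
    (hM : ∀ i, ∃ c, 1 ≤ |M c i|) :
    ENNReal.ofReal ((Fintype.card ι : ℝ) ^ (1 / p)) ≤
      piPQ (ENNReal.ofReal p) (ENNReal.ofReal q) (matrixOperator q M) := by
  classical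
  let e := (Fintype.equivFin ι).symm
  let x : Fin (Fintype.card ι) → DualLp q ι := fun k => (DualLp.coord q ι).symm (Pi.single (e k) 1)
  have hx : weakLq (ENNReal.ofReal q) x ≤ 1 := by
    rw [DualLp.weakLq_le_one_iff hq]
    intro g
    simpa [x, Matrix.mulVec] using (e.sum_comp fun i => |g i| ^ q).le
  have hnorm k : 1 ≤ ‖matrixOperator q M (x k)‖ := by
    obtain ⟨c, hc⟩ := hM (e k)
    refine hc.trans (le_trans (le_of_eq ?_) (norm_le_pi_norm (matrixOperator q M (x k)) c))
    simp [matrixOperator_apply, x]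
  calc ENNReal.ofReal ((Fintype.card ι : ℝ) ^ (1 / p))
      ≤ ENNReal.ofReal ((∑ k, ‖matrixOperator q M (x k)‖ ^ p) ^ (1 / p)) := by
        gcongr
        simpa using Finset.card_nsmul_le_sum Finset.univ _ 1
          fun k _ => Real.one_le_rpow (hnorm k) hp.le
    _ = eSum (ENNReal.ofReal p) fun k => ENNReal.ofReal ‖matrixOperator q M (x k)‖ :=
        (eSum_ofReal hp fun k => norm_nonneg _).symm
    _ ≤ piN (ENNReal.ofReal p) (ENNReal.ofReal q) (Fintype.card ι) (matrixOperator q M) :=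
        le_iSup (fun y : {y : Fin (Fintype.card ι) → DualLp q ι //
          weakLq (ENNReal.ofReal q) y ≤ 1} => eSum (ENNReal.ofReal p)
            fun k => ENNReal.ofReal ‖matrixOperator q M (y.1 k)‖) ⟨x, hx⟩
    _ ≤ _ := le_iSup (fun n => piN (ENNReal.ofReal p) (ENNReal.ofReal q) n (matrixOperator q M)) _

lemma piN_matrixOperator_le [Nonempty ι] (hq : 1 ≤ q) (hqp : q ≤ p) (hppq : p ≤ pq)
    (hpq : 1 / pq = 1 / q - 1 / 2)
    (hs : 1 / s = (1 - 1 / q) + (1 - 2 * (1 - 1 / q)) * (1 / q - 1 / p)) (hη : 0 ≤ η)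
    (hM : ∀ c, ∃ i₀, |M c i₀| ≤ 1 ∧ ∀ i ≠ i₀, |M c i| ≤ η) (k : ℕ) :
    piN (ENNReal.ofReal p) (ENNReal.ofReal q) k (matrixOperator q M) ≤
      ENNReal.ofReal ((k : ℝ) ^ (1 / p) + η * (Fintype.card ι : ℝ) ^ (1 / s + 1 / p)) := by
  have hq₀ : 0 < q := by linarith
  have hp₀ : 0 < p := by linarith
  refine iSup_le fun ⟨x, hx⟩ => ?_
  rw [DualLp.weakLq_le_one_iff hq₀] at hx
  rw [eSum_ofReal hp₀ fun j => norm_nonneg _]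
  refine ENNReal.ofReal_le_ofReal ?_
  set y : Fin k → ι → ℝ := fun j => DualLp.coord q ι (x j)
  have hy₀ j : 0 ≤ ∑ i, |y j i| := Finset.sum_nonneg fun i _ => abs_nonneg _
  have hnorm j : ‖matrixOperator q M (x j)‖ ≤ 1 + η * ∑ i, |y j i| := by
    refine (pi_norm_le_iff_of_nonneg (by positivity)).2 fun c => ?_
    obtain ⟨i₀, hi₀, hoff⟩ := hM c
    exact (abs_mulVec_apply_le hη hi₀ hoff (y j)).trans
      (by gcongr; exact hx.abs_apply_le_one hq₀ j i₀)
  calc (∑ j, ‖matrixOperator q M (x j)‖ ^ p) ^ (1 / p)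
      ≤ (∑ j, (1 + η * ∑ i, |y j i|) ^ p) ^ (1 / p) := by gcongr with j; exact hnorm j
    _ ≤ (∑ _ : Fin k, (1 : ℝ) ^ p) ^ (1 / p) + (∑ j, (η * ∑ i, |y j i|) ^ p) ^ (1 / p) :=
        Real.Lp_add_le_of_nonneg _ (hq.trans hqp) (fun _ _ => zero_le_one)
          fun j _ => by positivity
    _ = (k : ℝ) ^ (1 / p) + η * (∑ j, (∑ i, |y j i|) ^ p) ^ (1 / p) := by
        simp only [Real.mul_rpow hη (hy₀ _), ← Finset.mul_sum]
        rw [Real.mul_rpow (by positivity) (by positivity), one_div p,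
          Real.rpow_rpow_inv hη hp₀.ne']
        simp
    _ ≤ _ := by
        gcongr
        exact hx.sum_row_l1_rpow_le_of_le_of_le hq hqp hppq hpq hs

end MatrixOperator

section PolynomialGraphs

open Polynomial

variable {F ι : Type*} [Field F] [Fintype F]

lemma card_filter_eval_eq_lt [DecidableEq F] {P Q : F[X]} {d : ℕ} (hP : P.degree < d)
    (hQ : Q.degree < d) (hPQ : P ≠ Q) :
    (Finset.univ.filter fun z : F => P.eval z = Q.eval z).card < d := by
  contrapose! hPQ
  have hd : (d : WithBot ℕ) ≤ (Finset.univ.filter fun z : F => P.eval z = Q.eval z).card :=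
    mod_cast hPQ
  exact eq_of_degrees_lt_of_eval_finset_eq _ (hP.trans_le hd) (hQ.trans_le hd)
    fun z hz => (Finset.mem_filter.1 hz).2

/-- The rows are the indicator functions of the graphs of the polynomials `P i`. -/
def polynomialGraphMatrix [DecidableEq F] (P : ι → F[X]) : Matrix ι (F × F) ℝ :=
  Matrix.of fun i t => if (P i).eval t.1 = t.2 then 1 else 0

lemma polynomialGraphMatrix_mul_transpose_apply [DecidableEq F] (P : ι → F[X])
    (i j : ι) :
    (polynomialGraphMatrix P * (polynomialGraphMatrix P).transpose) i j =
      (Finset.univ.filter fun z : F => (P i).eval z = (P j).eval z).card := by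
  simp [Matrix.mul_apply, polynomialGraphMatrix, Fintype.sum_prod_type, eq_comm]

lemma exists_injective_degree_lt [Fintype ι] {d : ℕ}
    (hι : Fintype.card ι ≤ Fintype.card F ^ d) :
    ∃ P : ι → F[X], Function.Injective P ∧ ∀ i, (P i).degree < d := by
  obtain ⟨φ⟩ := Function.Embedding.nonempty_of_card_le
    (show Fintype.card ι ≤ Fintype.card (Fin d → F) by simpa using hι)
  let P := fun i => (degreeLTEquiv F d).symm (φ i)
  exact ⟨fun i => P i, Subtype.val_injective.comp <|
    (degreeLTEquiv F d).symm.injective.comp φ.injective, fun i => mem_degreeLT.1 (P i).2⟩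

variable (F) in
lemma exists_matrix_rank_le_sq_near_one [Fintype ι] {d : ℕ}
    (hι : Fintype.card ι ≤ Fintype.card F ^ d) :
    ∃ M : Matrix ι ι ℝ, M.rank ≤ Fintype.card F ^ 2 ∧ (∀ i, M i i = 1) ∧
      ∀ i j, i ≠ j → |M i j| ≤ d / Fintype.card F := by
  classical
  obtain ⟨P, hP, hdeg⟩ := exists_injective_degree_lt hι
  have hF : (0 : ℝ) < Fintype.card F := mod_cast Fintype.card_pos
  refine ⟨((Fintype.card F : ℝ)⁻¹ • polynomialGraphMatrix P) * (polynomialGraphMatrix P).transpose,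
    ?_, fun i => ?_, fun i j hij => ?_⟩
  · refine (Matrix.rank_mul_le_left _ _).trans ((Matrix.rank_le_card_width _).trans_eq ?_)
    rw [Fintype.card_prod, sq]
  · rw [Matrix.smul_mul, Matrix.smul_apply, polynomialGraphMatrix_mul_transpose_apply]
    simp [hF.ne']
  · rw [Matrix.smul_mul, Matrix.smul_apply, polynomialGraphMatrix_mul_transpose_apply, smul_eq_mul,
      inv_mul_eq_div, abs_of_nonneg (by positivity)]
    gcongr
    exact (card_filter_eval_eq_lt (hdeg i) (hdeg j) (hP.ne hij)).le

end PolynomialGraphs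

lemma exists_prime_mul_self_le_lt {n : ℕ} (hn : 4 ≤ n) :
    ∃ m : ℕ, m.Prime ∧ m * m ≤ n ∧ n < 4 * (m * m) := by
  have hsqrt : 2 ≤ n.sqrt := Nat.le_sqrt.2 (by omega)
  obtain ⟨m, hm, hlt, hle⟩ := Nat.exists_prime_lt_and_le_two_mul (n.sqrt / 2) (by omega)
  have hn_lt : n < (n.sqrt + 1) * (n.sqrt + 1) := Nat.lt_succ_sqrt n
  have hsqrt_lt : n.sqrt + 1 ≤ 2 * m := by omega
  exact ⟨m, hm, Nat.le_sqrt.1 (by omega), by nlinarith⟩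

lemma toReal_one_div_of_one_div_ofReal_add_eq_one {q : ℝ} {q' : ℝ≥0∞} (hq : 0 < q)
    (hconj : 1 / ENNReal.ofReal q + 1 / q' = 1) : (1 / q').toReal = 1 - 1 / q := by
  have hq' : 1 / q' = 1 - 1 / ENNReal.ofReal q :=
    ENNReal.eq_sub_of_add_eq' ENNReal.one_ne_top (by rw [add_comm, hconj])
  have hle : 1 / ENNReal.ofReal q ≤ 1 := le_self_add.trans_eq hconj
  rw [hq', ENNReal.toReal_sub_of_le hle ENNReal.one_ne_top, ENNReal.toReal_div,
    ENNReal.toReal_ofReal hq.le, ENNReal.toReal_one]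

lemma rpow_half_le_rpow_of_le_sq {x t s : ℝ} (hx : 0 ≤ x) (ht : 0 ≤ t) (hs : 0 ≤ s)
    (h : x ≤ t ^ 2) : x ^ (s / 2) ≤ t ^ s := by
  calc x ^ (s / 2) ≤ (t ^ 2) ^ (s / 2) := by gcongr
    _ = t ^ s := by rw [← Real.rpow_natCast_mul ht, Nat.cast_ofNat, mul_div_cancel₀ _ two_ne_zero]

section VectorsSuffice

/-- For all operators of rank at most `n`, `k` vectors compute `π_{p,q}` up to the factor `C`. -/
def VectorsSuffice.{u, v} (p q : ℝ≥0∞) (C : ℝ≥0) (n k : ℕ) : Prop :=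
  ∀ (X : Type u) (Y : Type v) [NormedAddCommGroup X] [NormedSpace ℝ X] [CompleteSpace X]
    [NormedAddCommGroup Y] [NormedSpace ℝ Y] [CompleteSpace Y] (T : X →L[ℝ] Y),
    RankLE T n → piPQ p q T ≤ (C : ℝ≥0∞) * piN p q k T

variable {p q s pq η : ℝ} {C : ℝ≥0} {N n k : ℕ}

lemma le_mul_of_vectorsSuffice_of_near_one.{u, v} (hq : 1 ≤ q) (hqp : q ≤ p) (hppq : p ≤ pq)
    (hpq : 1 / pq = 1 / q - 1 / 2)
    (hs : 1 / s = (1 - 1 / q) + (1 - 2 * (1 - 1 / q)) * (1 / q - 1 / p))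
    (hC : VectorsSuffice.{u, v} (ENNReal.ofReal p) (ENNReal.ofReal q) C n k) (hN : 0 < N)
    {M : Matrix (Fin N) (Fin N) ℝ} (hrank : M.rank ≤ n) (hdiag : ∀ i, M i i = 1) (hη : 0 ≤ η)
    (hoff : ∀ i j, i ≠ j → |M i j| ≤ η) (hsmall : 2 * C * η * (N : ℝ) ^ (1 / s) ≤ 1) :
    (N : ℝ) ≤ (2 * C) ^ p * k := by
  have : Fact (1 ≤ ENNReal.ofReal q) := ⟨by simpa using hq⟩
  have : NeZero N := ⟨hN.ne'⟩
  have hq₀ : 0 < q := by linarith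
  have hp₀ : 0 < p := by linarith
  let T : DualLp q (ULift.{u} (Fin N)) →L[ℝ] (ULift.{v} (Fin N) → ℝ) :=
    matrixOperator q (M.submatrix ULift.down ULift.down)
  have hlower : ENNReal.ofReal ((N : ℝ) ^ (1 / p)) ≤
      piPQ (ENNReal.ofReal p) (ENNReal.ofReal q) T := by
    simpa using ofReal_card_rpow_le_piPQ_matrixOperator (ι := ULift.{u} (Fin N))
      (κ := ULift.{v} (Fin N)) (M := M.submatrix ULift.down ULift.down) hq₀ hp₀
      fun i => ⟨⟨i.down⟩, by simp [hdiag]⟩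
  have hupper : piN (ENNReal.ofReal p) (ENNReal.ofReal q) k T ≤
      ENNReal.ofReal ((k : ℝ) ^ (1 / p) + η * (N : ℝ) ^ (1 / s + 1 / p)) := by
    simpa using piN_matrixOperator_le (ι := ULift.{u} (Fin N)) (κ := ULift.{v} (Fin N))
      (M := M.submatrix ULift.down ULift.down) hq hqp hppq hpq hs hη
      (fun c => ⟨⟨c.down⟩, by simp [hdiag],
        fun i hi => hoff _ _ fun h => hi (ULift.down_injective h.symm)⟩) k
  have hmain : (N : ℝ) ^ (1 / p) ≤
      C * ((k : ℝ) ^ (1 / p) + η * (N : ℝ) ^ (1 / s + 1 / p)) := by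
    have := hlower.trans <| (hC _ _ T <| rankLE_matrixOperator <|
      (M.rank_submatrix_le _ _).trans hrank).trans <| mul_le_mul_right hupper (C : ℝ≥0∞)
    rwa [← ENNReal.ofReal_coe_nnreal, ← ENNReal.ofReal_mul (by positivity),
      ENNReal.ofReal_le_ofReal_iff (by positivity)] at this
  have habsorb : (N : ℝ) ^ (1 / p) ≤ 2 * C * (k : ℝ) ^ (1 / p) := by
    rw [Real.rpow_add (by positivity)] at hmain
    have := mul_le_mul_of_nonneg_right hsmall (by positivity : 0 ≤ (N : ℝ) ^ (1 / p))
    linarith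
  calc (N : ℝ) = ((N : ℝ) ^ (1 / p)) ^ p := by
        rw [one_div, Real.rpow_inv_rpow (by positivity) hp₀.ne']
    _ ≤ (2 * C * (k : ℝ) ^ (1 / p)) ^ p := by gcongr
    _ = (2 * C) ^ p * k := by
        rw [Real.mul_rpow (by positivity) (by positivity), one_div,
          Real.rpow_inv_rpow (by positivity) hp₀.ne']

lemma one_le_mul_of_vectorsSuffice.{u, v} (hq : 1 ≤ q) (hqp : q ≤ p) (hppq : p ≤ pq)
    (hpq : 1 / pq = 1 / q - 1 / 2)
    (hs : 1 / s = (1 - 1 / q) + (1 - 2 * (1 - 1 / q)) * (1 / q - 1 / p))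
    (hC : VectorsSuffice.{u, v} (ENNReal.ofReal p) (ENNReal.ofReal q) C n k) (hn : 0 < n) :
    1 ≤ (2 * C) ^ p * (k : ℝ) := by
  simpa using le_mul_of_vectorsSuffice_of_near_one (N := 1) (M := 1) (η := 0) hq hqp hppq hpq hs
    hC one_pos ((Matrix.rank_le_card_width _).trans hn) (fun _ => Matrix.one_apply_eq _) le_rfl
    (fun i j hij => (hij (Subsingleton.elim i j)).elim) (by simp)

lemma div_rpow_le_of_vectorsSuffice.{u, v} (hq : 1 ≤ q) (hqp : q ≤ p) (hppq : p ≤ pq)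
    (hpq : 1 / pq = 1 / q - 1 / 2)
    (hs : 1 / s = (1 - 1 / q) + (1 - 2 * (1 - 1 / q)) * (1 / q - 1 / p)) (hs₀ : 0 < s)
    (hC : VectorsSuffice.{u, v} (ENNReal.ofReal p) (ENNReal.ofReal q) C n k)
    {m : ℕ} (hm : m.Prime) (hmn : m * m ≤ n) {K : ℝ} (hK : 1 ≤ K) (hKC : 2 * C * ⌈s⌉₊ ≤ K)
    (hKm : K ≤ m) :
    (m / K) ^ s ≤ 2 * ((2 * C) ^ p * (k : ℝ)) := by
  have : Fact m.Prime := ⟨hm⟩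
  have hm₁ : (1 : ℝ) ≤ m := hK.trans hKm
  set N := ⌊(m / K) ^ s⌋₊
  have hN : 0 < N :=
    Nat.floor_pos.2 (Real.one_le_rpow ((one_le_div (by positivity)).2 hKm) hs₀.le)
  have hN_le : (N : ℝ) ≤ (m / K) ^ s := Nat.floor_le (by positivity)
  have hN_card : Fintype.card (Fin N) ≤ Fintype.card (ZMod m) ^ ⌈s⌉₊ := by
    rw [Fintype.card_fin, ZMod.card, ← Nat.cast_le (α := ℝ), Nat.cast_pow, ← Real.rpow_natCast]
    calc (N : ℝ) ≤ (m / K) ^ s := hN_le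
      _ ≤ (m : ℝ) ^ s := by gcongr; exact div_le_self (by positivity) hK
      _ ≤ (m : ℝ) ^ (⌈s⌉₊ : ℝ) := Real.rpow_le_rpow_of_exponent_le hm₁ (Nat.le_ceil s)
  obtain ⟨M, hrank, hdiag, hoff⟩ := exists_matrix_rank_le_sq_near_one (ZMod m) hN_card
  rw [ZMod.card] at hrank hoff
  have hsmall : 2 * C * (⌈s⌉₊ / m) * (N : ℝ) ^ (1 / s) ≤ 1 := by
    calc 2 * C * (⌈s⌉₊ / m) * (N : ℝ) ^ (1 / s) ≤ 2 * C * (⌈s⌉₊ / m) * (m / K) := by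
          gcongr
          rwa [one_div, Real.rpow_inv_le_iff_of_pos (by positivity) (by positivity) hs₀]
      _ = 2 * C * ⌈s⌉₊ / K := by field_simp
      _ ≤ 1 := div_le_one_of_le₀ hKC (by positivity)
  have hbound : (N : ℝ) ≤ (2 * C) ^ p * k :=
    le_mul_of_vectorsSuffice_of_near_one hq hqp hppq hpq hs hC hN
      (hrank.trans (by rwa [sq])) hdiag (by positivity) hoff hsmall
  have hN₁ : (1 : ℝ) ≤ N := mod_cast hN
  linarith [Nat.lt_floor_add_one ((m / K) ^ s)]

lemma rpow_half_le_of_vectorsSuffice.{u, v} (hq : 1 ≤ q) (hqp : q ≤ p) (hppq : p ≤ pq)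
    (hpq : 1 / pq = 1 / q - 1 / 2)
    (hs : 1 / s = (1 - 1 / q) + (1 - 2 * (1 - 1 / q)) * (1 / q - 1 / p)) (hs₀ : 0 < s)
    (hC : VectorsSuffice.{u, v} (ENNReal.ofReal p) (ENNReal.ofReal q) C n k)
    {K : ℝ} (hK : 1 ≤ K) (hKC : 2 * C * ⌈s⌉₊ ≤ K) :
    (n : ℝ) ^ (s / 2) ≤ (2 * K) ^ s * (2 * ((2 * C) ^ p * k)) := by
  obtain rfl | hn := n.eq_zero_or_pos
  · rw [Nat.cast_zero, Real.zero_rpow (by positivity)]; positivity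
  obtain hnK | hnK := le_or_gt (n : ℝ) ((2 * K) ^ 2)
  · have hone := one_le_mul_of_vectorsSuffice hq hqp hppq hpq hs hC hn
    exact (rpow_half_le_rpow_of_le_sq (by positivity) (by positivity) hs₀.le hnK).trans
      (le_mul_of_one_le_right (by positivity) (by linarith))
  · have hn₄ : 4 ≤ n := by
      have : (4 : ℝ) ≤ n := by nlinarith
      exact_mod_cast this
    obtain ⟨m, hm, hmn, hnm⟩ := exists_prime_mul_self_le_lt hn₄
    have hnm' : (n : ℝ) < (2 * m) ^ 2 := by
      rw [mul_pow, sq (m : ℝ)]; norm_num; exact_mod_cast hnm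
    have hKm : K ≤ m := by
      have := lt_of_pow_lt_pow_left₀ 2 (by positivity) (hnK.trans hnm')
      linarith
    calc (n : ℝ) ^ (s / 2) ≤ (2 * m) ^ s :=
          rpow_half_le_rpow_of_le_sq (by positivity) (by positivity) hs₀.le hnm'.le
      _ = (2 * K) ^ s * (m / K) ^ s := by
        rw [← Real.mul_rpow (by positivity) (by positivity)]; congr 1; field_simp
      _ ≤ (2 * K) ^ s * (2 * ((2 * C) ^ p * k)) := by
        gcongr
        exact div_rpow_le_of_vectorsSuffice hq hqp hppq hpq hs hs₀ hC hm hmn hK hKC hKm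

end VectorsSuffice

theorem statement17_general.{u, v} (q p s pq : ℝ) (hq1 : 1 ≤ q) (hpq : 1 / pq = 1 / q - 1 / 2)
    (hqp : q ≤ p) (hppq : p ≤ pq)
    (hs : 1 / s = (1 - 1 / q) + (1 - 2 * (1 - 1 / q)) * (1 / q - 1 / p)) (hs₀ : 0 < s)
    (C : ℝ≥0) :
    ∃ c : ℝ, 0 < c ∧ ∀ n k : ℕ,
      VectorsSuffice.{u, v} (ENNReal.ofReal p) (ENNReal.ofReal q) C n k →
        (n : ℝ) ^ (s / 2) ≤ c * k := by
  set K : ℝ := 2 * C * ⌈s⌉₊ + 1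
  have hK : 1 ≤ K := le_add_of_nonneg_left (by positivity)
  have hKC : 2 * C * ⌈s⌉₊ ≤ K := le_add_of_nonneg_right zero_le_one
  refine ⟨(2 * K) ^ s * (2 * (2 * C) ^ p + 1), by positivity, fun n k hC => ?_⟩
  calc (n : ℝ) ^ (s / 2) ≤ (2 * K) ^ s * (2 * ((2 * C) ^ p * k)) :=
        rpow_half_le_of_vectorsSuffice hq1 hqp hppq hpq hs hs₀ hC hK hKC
    _ = (2 * K) ^ s * (2 * (2 * C) ^ p) * k := by ring
    _ ≤ (2 * K) ^ s * (2 * (2 * C) ^ p + 1) * k := by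
        gcongr
        exact le_add_of_nonneg_right zero_le_one

/-- for `1 ≤ q < 2`, `q ≤ p < p_q` (with `1/p_q = 1/q - 1/2`) and
`2 < s` defined by `1/s = 1/q' + (1 - 2/q')(1/q - 1/p)`, any sequence `k_n`
satisfying `π_{p,q}(T) ≤ C π_{p,q}^{k_n}(T)` for all rank-`n` operators must
satisfy `n^{s/2} ≤ c₁ e^{c₁ √(1 + ln n)} k_n`. -/
theorem statement17 (q p s pq : ℝ) (q' : ℝ≥0∞)
    (hq1 : 1 ≤ q) (hq2 : q < 2) (hconj : 1 / ENNReal.ofReal q + 1 / q' = 1)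
    (hpq : 1 / pq = 1 / q - 1 / 2) (hqp : q ≤ p) (hppq : p < pq)
    (hs : 1 / s = (1 / q').toReal + (1 - 2 * (1 / q').toReal) * (1 / q - 1 / p))
    (hs2 : 2 < s) :
    ∀ (C : ℝ≥0), 0 < C → ∀ k : ℕ → ℕ,
      (∀ (n : ℕ) (X Y : Type*) [NormedAddCommGroup X] [NormedSpace ℝ X] [CompleteSpace X]
        [NormedAddCommGroup Y] [NormedSpace ℝ Y] [CompleteSpace Y]
        (T : X →L[ℝ] Y), RankLE T n →
          piPQ (ENNReal.ofReal p) (ENNReal.ofReal q) T ≤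
            (C : ℝ≥0∞) * piN (ENNReal.ofReal p) (ENNReal.ofReal q) (k n) T) →
      ∃ c₁ : ℝ, 0 < c₁ ∧
        ∀ n : ℕ, (n : ℝ) ^ (s / 2) ≤
          c₁ * Real.exp (c₁ * Real.sqrt (1 + Real.log n)) * k n := by
  intro C _ k h
  rw [toReal_one_div_of_one_div_ofReal_add_eq_one (by linarith) hconj] at hs
  obtain ⟨c, hc, hbound⟩ :=
    statement17_general q p s pq hq1 hpq hqp hppq.le hs (by linarith) C
  refine ⟨c, hc, fun n => (hbound n (k n) (h n)).trans ?_⟩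
  gcongr
  exact le_mul_of_one_le_right hc.le (Real.one_le_exp (by positivity))

end
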